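/- Let A be the polynomial ring over ℚ[ε] in the variables u^α_i for α ∈ {1,2,3,4} and i ∈ ℕ (write u^α := u^α_0), and let D : A → A be the unique ℚ[ε]-derivation with D(u^α_i) = u^α_{i+1}. Let G := (u¹)²u⁴/2 + u¹u²u³ + (u²)³/6 + (u³)⁴/30 + u²(u³)²u⁴/5 + (u²)²(u⁴)²/10 + (u³)²(u⁴)³/50 + (u⁴)⁶/3750 + ε²( u¹u¹_2/6 + 3u²u³u³_2/20 + u²(u³_1)²/10 + u¹_2u³u⁴/20 + u²u²_2u⁴/10 + (u²_1)²u⁴/40 + u²u⁴(u⁴_1)²/50 + u²(u⁴)²u⁴_2/75 + (u³)²u⁴u⁴_2/75 + u³u³_2(u⁴)²/50 + (u⁴)⁴u⁴_2/1200 ) + ε⁴( 7u²u²_4/600 + 11u¹u³_4/900 + 7u²u⁴u⁴_4/1200 + 17u²u⁴_1u⁴_3/1200 + 71u²(u⁴_2)²/7200 + 31u³u³_4u⁴/3600 + 7u³_1u³_3u⁴/450 + 91(u³_2)²u⁴/7200 + 13(u⁴_2)²(u⁴)²/12000 + 3u⁴_2(u⁴_1)²u⁴/4000 ) + ε⁶(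 53u³u³_6/108000 + 11u²u⁴_6/18000 + 1397(u⁴_3)²u⁴/6480000 + 617u⁴_4u⁴_2u⁴/1620000 ) + ε⁸·107u⁴u⁴_8/10800000, and let H := (w¹)²w⁴/2 + w¹w²w³ + (w²)³/6 + (w²)²(w⁴)²/10 + w²(w³)²w⁴/5 + (w³)⁴/30 + (w³)²(w⁴)³/50 + (w⁴)⁶/3750 + ε²( w⁴_2(w⁴)⁴/1200 + w⁴_2w²(w⁴)²/100 + w³_2w³(w⁴)²/50 + (w²_1)²w⁴/120 + w⁴_2(w³)²w⁴/100 + (w⁴_1)²w²w⁴/50 + w²_2w²w⁴/12 + w¹_2w³w⁴/30 + w¹_2w¹/6 + w³_1w⁴_1w¹/30 + (w³_1)²w²/10 + 2w³_2w²w³/15 ) + ε⁴( w⁴_4(w⁴)³/14400 + 49(w⁴_2)²(w⁴)²/72000 + 13(w³_2)²w⁴/1800 + 7w³_1w³_3w⁴/900 + w⁴_4w²w⁴/300 + w³_4w³w⁴/180 + w³_4w¹/150 + (w⁴_2)²w²/120 + 7w²_4w²/600 + 7w⁴_1w⁴_3w²/600 ) + ε⁶( 178w⁴(w⁴_3)²/10125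 − 589w⁴_6(w⁴)²/135000 + w⁴_6w²/4500 + w³_6w³/3000 + 1069w⁴_2w⁴_4w⁴/40500 ) + ε⁸ w⁴_8w⁴/337500, regarded as a polynomial in variables w^α_i. Let φ : A → A be the ℚ[ε]-algebra homomorphism obtained by substituting w^α_i := D^i(W^α) where W¹ := u¹ + (ε²/60)u³_2, W² := u² + (ε²/60)u⁴_2, W³ := u³, W⁴ := u⁴. Then φ(H) − G lies in the image of D, i.e. there exists S ∈ A with φ(H) − G = D(S). -/

import Mathlib

/-!
Write `φ` for the substitution `w^α_i ↦ D^i(W^α)`, `H` and `G` for `H5` and `G5`. Each side of the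
identity is an explicit differential polynomial, so the theorem amounts to
exhibiting `S`. Both densities are graded by the power of `ε`, by the multiset of fields
`u^α` occurring in a monomial, and by the total number of `x`-derivatives; `D` preserves
the first two gradings and raises the third by one. Hence `φ(H) - G = D S` splits into small linear
systems over `ℚ` for the coefficients of `S`, and `primitive5` is a solution of these systems.

To verify the solution, `E` and rational scalars are pulled out of `D` (lemmas `D_E` and
`D_smul`), the jets of the Miura transformation are computed (lemmas `iterate_W_zero` to
`iterate_W_three`), and the remaining claim is a polynomial identity in the jet variables.
-/

noncomputable section

open MvPolynomial

/-- The ring of differential polynomials in `u¹, u², u³, u⁴` over `ℚ[ε]`: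
the polynomial ring over `ℚ[ε]` in the jet variables `u^α_i`, `α ∈ {1,2,3,4}`, `i ∈ ℕ`. -/
abbrev A4 : Type := MvPolynomial (Fin 4 × ℕ) (Polynomial ℚ)

/-- The jet variable `u^α_i` (indices `α = 0, 1, 2, 3` standing for `u¹, u², u³, u⁴`). -/
def jet (α : Fin 4) (i : ℕ) : A4 := X (α, i)

/-- The element `ε` of `A4`. -/
def E : A4 := C Polynomial.X

/-- The density `G` of the Hamiltonian `ḡ_{1,1}` of the double ramification
hierarchy of the 5-spin theory (in the variables `u^α_i`). -/
def G5 : A4 :=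
  (1/2 : ℚ) • (jet 0 0 ^ 2 * jet 3 0) + jet 0 0 * jet 1 0 * jet 2 0
  + (1/6 : ℚ) • (jet 1 0 ^ 3) + (1/30 : ℚ) • (jet 2 0 ^ 4)
  + (1/5 : ℚ) • (jet 1 0 * jet 2 0 ^ 2 * jet 3 0)
  + (1/10 : ℚ) • (jet 1 0 ^ 2 * jet 3 0 ^ 2)
  + (1/50 : ℚ) • (jet 2 0 ^ 2 * jet 3 0 ^ 3) + (1/3750 : ℚ) • (jet 3 0 ^ 6)
  + E ^ 2 * ((1/6 : ℚ) • (jet 0 0 * jet 0 2) + (3/20 : ℚ) • (jet 1 0 * jet 2 0 * jet 2 2)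
      + (1/10 : ℚ) • (jet 1 0 * jet 2 1 ^ 2) + (1/20 : ℚ) • (jet 0 2 * jet 2 0 * jet 3 0)
      + (1/10 : ℚ) • (jet 1 0 * jet 1 2 * jet 3 0) + (1/40 : ℚ) • (jet 1 1 ^ 2 * jet 3 0)
      + (1/50 : ℚ) • (jet 1 0 * jet 3 0 * jet 3 1 ^ 2)
      + (1/75 : ℚ) • (jet 1 0 * jet 3 0 ^ 2 * jet 3 2)
      + (1/75 : ℚ) • (jet 2 0 ^ 2 * jet 3 0 * jet 3 2)
      + (1/50 : ℚ) • (jet 2 0 * jet 2 2 * jet 3 0 ^ 2)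
      + (1/1200 : ℚ) • (jet 3 0 ^ 4 * jet 3 2))
  + E ^ 4 * ((7/600 : ℚ) • (jet 1 0 * jet 1 4) + (11/900 : ℚ) • (jet 0 0 * jet 2 4)
      + (7/1200 : ℚ) • (jet 1 0 * jet 3 0 * jet 3 4)
      + (17/1200 : ℚ) • (jet 1 0 * jet 3 1 * jet 3 3)
      + (71/7200 : ℚ) • (jet 1 0 * jet 3 2 ^ 2)
      + (31/3600 : ℚ) • (jet 2 0 * jet 2 4 * jet 3 0)
      + (7/450 : ℚ) • (jet 2 1 * jet 2 3 * jet 3 0)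
      + (91/7200 : ℚ) • (jet 2 2 ^ 2 * jet 3 0)
      + (13/12000 : ℚ) • (jet 3 2 ^ 2 * jet 3 0 ^ 2)
      + (3/4000 : ℚ) • (jet 3 2 * jet 3 1 ^ 2 * jet 3 0))
  + E ^ 6 * ((53/108000 : ℚ) • (jet 2 0 * jet 2 6) + (11/18000 : ℚ) • (jet 1 0 * jet 3 6)
      + (1397/6480000 : ℚ) • (jet 3 3 ^ 2 * jet 3 0)
      + (617/1620000 : ℚ) • (jet 3 4 * jet 3 2 * jet 3 0))
  + E ^ 8 * ((107/10800000 : ℚ) • (jet 3 0 * jet 3 8))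

/-- The density `H` of the Hamiltonian `h̄_{1,1}` of the 5-spin Dubrovin–Zhang
hierarchy, regarded as a polynomial in the variables `w^α_i` (here again realized
as the generators `X (α, i)` of the same ring `A4`). -/
def H5 : A4 :=
  (1/2 : ℚ) • (jet 0 0 ^ 2 * jet 3 0) + jet 0 0 * jet 1 0 * jet 2 0
  + (1/6 : ℚ) • (jet 1 0 ^ 3) + (1/10 : ℚ) • (jet 1 0 ^ 2 * jet 3 0 ^ 2)
  + (1/5 : ℚ) • (jet 1 0 * jet 2 0 ^ 2 * jet 3 0) + (1/30 : ℚ) • (jet 2 0 ^ 4)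
  + (1/50 : ℚ) • (jet 2 0 ^ 2 * jet 3 0 ^ 3) + (1/3750 : ℚ) • (jet 3 0 ^ 6)
  + E ^ 2 * ((1/1200 : ℚ) • (jet 3 2 * jet 3 0 ^ 4)
      + (1/100 : ℚ) • (jet 3 2 * jet 1 0 * jet 3 0 ^ 2)
      + (1/50 : ℚ) • (jet 2 2 * jet 2 0 * jet 3 0 ^ 2)
      + (1/120 : ℚ) • (jet 1 1 ^ 2 * jet 3 0)
      + (1/100 : ℚ) • (jet 3 2 * jet 2 0 ^ 2 * jet 3 0)
      + (1/50 : ℚ) • (jet 3 1 ^ 2 * jet 1 0 * jet 3 0)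
      + (1/12 : ℚ) • (jet 1 2 * jet 1 0 * jet 3 0)
      + (1/30 : ℚ) • (jet 0 2 * jet 2 0 * jet 3 0)
      + (1/6 : ℚ) • (jet 0 2 * jet 0 0)
      + (1/30 : ℚ) • (jet 2 1 * jet 3 1 * jet 0 0)
      + (1/10 : ℚ) • (jet 2 1 ^ 2 * jet 1 0)
      + (2/15 : ℚ) • (jet 2 2 * jet 1 0 * jet 2 0))
  + E ^ 4 * ((1/14400 : ℚ) • (jet 3 4 * jet 3 0 ^ 3)
      + (49/72000 : ℚ) • (jet 3 2 ^ 2 * jet 3 0 ^ 2)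
      + (13/1800 : ℚ) • (jet 2 2 ^ 2 * jet 3 0)
      + (7/900 : ℚ) • (jet 2 1 * jet 2 3 * jet 3 0)
      + (1/300 : ℚ) • (jet 3 4 * jet 1 0 * jet 3 0)
      + (1/180 : ℚ) • (jet 2 4 * jet 2 0 * jet 3 0)
      + (1/150 : ℚ) • (jet 2 4 * jet 0 0)
      + (1/120 : ℚ) • (jet 3 2 ^ 2 * jet 1 0)
      + (7/600 : ℚ) • (jet 1 4 * jet 1 0)
      + (7/600 : ℚ) • (jet 3 1 * jet 3 3 * jet 1 0))
  + E ^ 6 * ((178/10125 : ℚ) • (jet 3 0 * jet 3 3 ^ 2)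
      - (589/135000 : ℚ) • (jet 3 6 * jet 3 0 ^ 2)
      + (1/4500 : ℚ) • (jet 3 6 * jet 1 0)
      + (1/3000 : ℚ) • (jet 2 6 * jet 2 0)
      + (1069/40500 : ℚ) • (jet 3 2 * jet 3 4 * jet 3 0))
  + E ^ 8 * ((1/337500 : ℚ) • (jet 3 8 * jet 3 0))

/-- The Miura transformation
`w¹ = u¹ + (ε²/60) u³ₓₓ, w² = u² + (ε²/60) u⁴ₓₓ, w³ = u³, w⁴ = u⁴`. -/
def W5 : Fin 4 → A4 :=
  ![jet 0 0 + (1/60 : ℚ) • (E ^ 2 * jet 2 2),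
    jet 1 0 + (1/60 : ℚ) • (E ^ 2 * jet 3 2),
    jet 2 0, jet 3 0]

/-- A differential polynomial whose total `x`-derivative is `φ(H) - G`: it collects the boundary
terms of the integrations by parts that turn the Miura-transformed density `H5` into `G5`. It is
determined up to an additive constant, since `D` kills only constants. -/
def primitive5 : A4 :=
  E ^ 2 * ((1/60 : ℚ) • (jet 0 0 * jet 2 0 * jet 3 1)
      + (1/60 : ℚ) • (jet 0 0 * jet 2 1 * jet 3 0)
      + (-1/60 : ℚ) • (jet 0 1 * jet 2 0 * jet 3 0)
      + (1/120 : ℚ) • (jet 1 0 ^ 2 * jet 3 1)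
      + (-1/60 : ℚ) • (jet 1 0 * jet 1 1 * jet 3 0))
  + E ^ 4 * ((-1/360 : ℚ) • (jet 0 0 * jet 2 3)
      + (1/360 : ℚ) • (jet 0 1 * jet 2 2)
      + (-1/900 : ℚ) • (jet 1 0 * jet 3 0 * jet 3 3)
      + (-1/720 : ℚ) • (jet 1 0 * jet 3 1 * jet 3 2)
      + (1/720 : ℚ) • (jet 1 1 * jet 3 0 * jet 3 2)
      + (1/400 : ℚ) • (jet 2 0 * jet 2 2 * jet 3 1)
      + (-1/400 : ℚ) • (jet 2 0 * jet 2 3 * jet 3 0)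
      + (1/600 : ℚ) • (jet 2 1 ^ 2 * jet 3 1)
      + (-19/3600 : ℚ) • (jet 2 1 * jet 2 2 * jet 3 0)
      + (1/14400 : ℚ) • (jet 3 0 ^ 3 * jet 3 3)
      + (-1/4800 : ℚ) • (jet 3 0 ^ 2 * jet 3 1 * jet 3 2))
  + E ^ 6 * ((-7/36000 : ℚ) • (jet 1 0 * jet 3 5)
      + (7/36000 : ℚ) • (jet 1 1 * jet 3 4)
      + (-7/36000 : ℚ) • (jet 1 2 * jet 3 3)
      + (7/36000 : ℚ) • (jet 1 3 * jet 3 2)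
      + (-17/108000 : ℚ) • (jet 2 0 * jet 2 5)
      + (17/108000 : ℚ) • (jet 2 1 * jet 2 4)
      + (-589/135000 : ℚ) • (jet 3 0 ^ 2 * jet 3 5)
      + (589/67500 : ℚ) • (jet 3 0 * jet 3 1 * jet 3 4)
      + (56269/3240000 : ℚ) • (jet 3 0 * jet 3 2 * jet 3 3)
      + (-589/67500 : ℚ) • (jet 3 1 ^ 2 * jet 3 3)
      + (181/1296000 : ℚ) • (jet 3 1 * jet 3 2 ^ 2))
  + E ^ 8 * ((-1/144000 : ℚ) • (jet 3 0 * jet 3 7)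
      + (1/144000 : ℚ) • (jet 3 1 * jet 3 6))

section Derivation

variable (D : Derivation (Polynomial ℚ) A4 A4)

lemma D_E : D E = 0 := D.map_algebraMap Polynomial.X

lemma D_E_pow_mul (n : ℕ) (x : A4) : D (E ^ n * x) = E ^ n * D x := by
  simp [Derivation.leibniz_pow, D_E]

/-- `D` is a priori only `ℚ[ε]`-linear; `ℚ`-linearity holds for any additive map. -/
lemma D_smul (q : ℚ) (x : A4) : D (q • x) = q • D x := map_rat_smul D q x

lemma iterate_jet
    (hD : ∀ (α : Fin 4) (i : ℕ), D (jet α i) = jet α (i + 1))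
    (α : Fin 4) (i n : ℕ) :
    (⇑D)^[n] (jet α i) = jet α (i + n) := by
  induction n with
  | zero => rfl
  | succ n ih => rw [Function.iterate_succ_apply', ih, hD, add_assoc]

/-- The common shape of the first two components of the Miura transformation. -/
lemma iterate_jet_add
    (hD : ∀ (α : Fin 4) (i : ℕ), D (jet α i) = jet α (i + 1))
    (α β : Fin 4) (n : ℕ) :
    (⇑D)^[n] (jet α 0 + (1/60 : ℚ) • (E ^ 2 * jet β 2))
      = jet α n + (1/60 : ℚ) • (E ^ 2 * jet β (n + 2)) := by
  induction n with
  | zero => rfl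
  | succ n ih =>
    rw [Function.iterate_succ_apply', ih, map_add, D_smul, D_E_pow_mul, hD, hD,
      Nat.add_right_comm]

lemma iterate_W_zero
    (hD : ∀ (α : Fin 4) (i : ℕ), D (jet α i) = jet α (i + 1)) (n : ℕ) :
    (⇑D)^[n] (W5 0) = jet 0 n + (1/60 : ℚ) • (E ^ 2 * jet 2 (n + 2)) :=
  iterate_jet_add D hD 0 2 n

lemma iterate_W_one
    (hD : ∀ (α : Fin 4) (i : ℕ), D (jet α i) = jet α (i + 1)) (n : ℕ) :
    (⇑D)^[n] (W5 1) = jet 1 n + (1/60 : ℚ) • (E ^ 2 * jet 3 (n + 2)) :=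
  iterate_jet_add D hD 1 3 n

lemma iterate_W_two
    (hD : ∀ (α : Fin 4) (i : ℕ), D (jet α i) = jet α (i + 1)) (n : ℕ) :
    (⇑D)^[n] (W5 2) = jet 2 n := by
  simpa [W5] using iterate_jet D hD 2 0 n

lemma iterate_W_three
    (hD : ∀ (α : Fin 4) (i : ℕ), D (jet α i) = jet α (i + 1)) (n : ℕ) :
    (⇑D)^[n] (W5 3) = jet 3 n := by
  simpa [W5] using iterate_jet D hD 3 0 n

end Derivation

/-- under the Miura transformation `w¹ = u¹ + (ε²/60)u³ₓₓ,
`w² = u² + (ε²/60)u⁴ₓₓ, w³ = u³, w⁴ = u⁴` (with `w^α_i = D^i(W^α)`, `D` the total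
`x`-derivative), the DZ density `H` and the DR density `G` of the 5-spin theory
differ by a total derivative. -/
theorem rspin5_DR_eq_DZ_g11
    (D : Derivation (Polynomial ℚ) A4 A4)
    (hD : ∀ (α : Fin 4) (i : ℕ), D (jet α i) = jet α (i + 1)) :
    ∃ S : A4, (aeval fun pr : Fin 4 × ℕ => (⇑D)^[pr.2] (W5 pr.1)) H5 - G5 = D S := by
  refine ⟨primitive5, ?_⟩
  -- The substitution `φ` on generators, on `ε`, and on rational scalars.
  set φ := (aeval fun pr : Fin 4 × ℕ => (⇑D)^[pr.2] (W5 pr.1) : A4 →ₐ[Polynomial ℚ] A4) with hφ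
  have hjet (α : Fin 4) (i : ℕ) : φ (jet α i) = (⇑D)^[i] (W5 α) := by simp [hφ, jet]
  have hE : φ E = E := φ.commutes Polynomial.X
  have hsmul (q : ℚ) (x : A4) : φ (q • x) = q • φ x := map_rat_smul φ q x
  simp only [H5, G5, primitive5, map_add, map_sub, map_mul, map_pow, hsmul, hE, hjet,
    iterate_W_zero D hD, iterate_W_one D hD, iterate_W_two D hD, iterate_W_three D hD,
    D_E, D_smul, Derivation.leibniz, Derivation.leibniz_pow, hD, smul_eq_mul,
    nsmul_eq_mul, Nat.reduceAdd, Nat.reduceSub, pow_one]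
  algebra
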